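/- Fix an integer k ≥ 416. Let G be a finite simple graph, L a 10-assignment for G, and α, β two L-colorings of G. Suppose G contains five distinct vertices v1, v2, w1, w2, w3 with edges v1v2, v1w1, v1w2, v2w2, v2w3, w1w2, w2w3, with d_G(v1) = d_G(v2) = 5, d_G(w1) = d_G(w3) = 6, and d_G(w2) = 7. Let S = {v1, v2, w1, w2, w3}. If there exists a k-good recoloring sequence in G − S from the restriction of α to G − S to the restriction of β to G − S, then there exists a k-good recoloring sequence in G from α to β. -/

import Mathlib

def IsLColoring {V : Type} (G : SimpleGraph V) (L : V → Finset ℕ) (φ : V → ℕ) : Prop :=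
  (∀ v, φ v ∈ L v) ∧ ∀ ⦃u w : V⦄, G.Adj u w → φ u ≠ φ w

def recolorCount {V : Type} {m : ℕ} (φ : Fin (m + 1) → V → ℕ) (v : V) : ℕ :=
  (Finset.univ.filter fun i : Fin m => φ i.castSucc v ≠ φ i.succ v).card

def IsRecolSeq {V : Type} (G : SimpleGraph V) (L : V → Finset ℕ) {m : ℕ}
    (φ : Fin (m + 1) → V → ℕ) (α β : V → ℕ) : Prop :=
  φ 0 = α ∧ φ (Fin.last m) = β ∧ (∀ i, IsLColoring G L (φ i)) ∧
    ∀ i : Fin m, ∃! v : V, φ i.castSucc v ≠ φ i.succ v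

/-! First extend the given sequence to the path `w₁ w₂ w₃`, with `v₁, v₂` deleted; then to `v₁, v₂`.

A new vertex is recolored only when the next move of the given sequence would give a neighbor its
color. If the vertex has more than `ℓ` colors to spare, its new color can also avoid the next `ℓ`
colors its neighbors will receive, so it moves at most once per `ℓ` moves of its neighbors. Here
`ℓ = 4`, and reaching `β` on the new vertices at the end costs up to three more moves each. As `w₁`
and `w₃` see up to `4k` moves, this would give `k + 3`, so three moves must be saved: twelve times
each, `w₁` and `w₃` look one color further by ignoring the current color of `w₂`, which has to step
aside if it is in the way. Since `w₂` sees at most `3k` moves, it can afford this and still moves so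
rarely that `v₁` and `v₂` stay within `k` moves.
-/

namespace ListRecoloring

open Function

section Coloring

variable {V C : Type*} {G : SimpleGraph V} {L : V → Finset C} {A : Set V} {φ ψ : V → C} {x : V}

/-- `φ` restricts to an `L`-coloring of the subgraph of `G` induced on `A`. Colorings stay functions
on all of `V`, with irrelevant values off `A`, so that deleting vertices does not change types. -/
structure IsLColoringOn (G : SimpleGraph V) (L : V → Finset C) (A : Set V) (φ : V → C) : Prop where
  mem : ∀ v ∈ A, φ v ∈ L v
  ne : ∀ u ∈ A, ∀ w ∈ A, G.Adj u w → φ u ≠ φ w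

lemma IsLColoringOn.congr (h : IsLColoringOn G L A φ) (heq : Set.EqOn φ ψ A) :
    IsLColoringOn G L A ψ where
  mem v hv := heq hv ▸ h.mem v hv
  ne u hu w hw hadj := heq hu ▸ heq hw ▸ h.ne u hu w hw hadj

lemma IsLColoringOn.mono {A' : Set V} (h : IsLColoringOn G L A φ) (hA : A' ⊆ A) :
    IsLColoringOn G L A' φ :=
  ⟨fun v hv => h.mem v (hA hv), fun u hu w hw => h.ne u (hA hu) w (hA hw)⟩

protected lemma IsLColoringOn.update [DecidableEq V] {c : C} (h : IsLColoringOn G L A φ)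
    (hc : c ∈ L x) (hne : ∀ u ∈ G.neighborSet x ∩ A, φ u ≠ c) :
    IsLColoringOn G L A (update φ x c) where
  mem v hv := by
    rcases eq_or_ne v x with rfl | hvx
    · simpa using hc
    · simpa [hvx] using h.mem v hv
  ne u hu w hw hadj := by
    rcases eq_or_ne u x with rfl | hux
    · simpa [hadj.ne'] using (hne w ⟨hadj, hw⟩).symm
    · rcases eq_or_ne w x with rfl | hwx
      · simpa [hux] using hne u ⟨hadj.symm, hu⟩
      · simpa [hux, hwx] using h.ne u hu w hw hadj

lemma IsLColoringOn.update_of_sdiff [DecidableEq V] {X : Set V} {c : C} (hφ : IsLColoringOn G L A φ)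
    (hx : x ∈ A \ X) (hupd : IsLColoringOn G L (A \ X) (update φ x c))
    (hX : ∀ y ∈ X, G.Adj y x → φ y ≠ c) : IsLColoringOn G L A (update φ x c) := by
  refine hφ.update (by simpa using hupd.mem x hx) fun u ⟨hadj, hu⟩ => ?_
  by_cases huX : u ∈ X
  · exact hX u huX hadj.symm
  · simpa [SimpleGraph.Adj.ne' hadj] using hupd.ne u ⟨hu, huX⟩ x hx hadj.symm

/-- The list of `x` has more than `n` colors beyond those that the neighbors of `x` in `A` can
block. -/
def HasSlack (G : SimpleGraph V) (L : V → Finset C) (A : Set V) (x : V) (n : ℕ) : Prop :=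
  (G.neighborSet x ∩ A).encard + n < (L x).card

lemma HasSlack.mono {m n : ℕ} (h : HasSlack G L A x n) (hmn : m ≤ n) : HasSlack G L A x m :=
  lt_of_le_of_lt (by gcongr) h

lemma hasSlack_of_disjoint [Fintype (G.neighborSet x)] {d n : ℕ} {Z : Finset V}
    (hZ : Z ⊆ G.neighborFinset x) (hd : G.degree x ≤ d + Z.card) (hA : Disjoint ↑Z A)
    (hL : d + n < (L x).card) : HasSlack G L A x n := by
  classical
  have hsub : G.neighborSet x ∩ A ⊆ ↑(G.neighborFinset x \ Z) := fun u hu => by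
    simpa using ⟨hu.1, fun huZ => hA.notMem_of_mem_left huZ hu.2⟩
  have hcard : (G.neighborFinset x \ Z).card ≤ d := by
    rw [Finset.card_sdiff_of_subset hZ, G.card_neighborFinset_eq_degree]
    omega
  calc (G.neighborSet x ∩ A).encard + n ≤ (d : ℕ∞) + n := by
        gcongr
        refine (Set.encard_le_encard hsub).trans ?_
        rw [Set.encard_coe_eq_coe_finsetCard]
        exact_mod_cast hcard
    _ < (L x).card := by exact_mod_cast hL

lemma exists_mem_forall_ne_notMem {s : Finset C} {N : Set V} {l : List C} {n : ℕ}
    (hs : N.encard + n < s.card) (hl : l.length ≤ n) :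
    ∃ c ∈ s, (∀ u ∈ N, φ u ≠ c) ∧ c ∉ l := by
  classical
  by_contra! hall
  have hsub : (s : Set C) ⊆ φ '' N ∪ l.toFinset := by
    intro c hc
    by_cases hN : ∀ u ∈ N, φ u ≠ c
    · exact .inr (by simpa using hall c hc hN)
    · push Not at hN
      exact .inl hN
  refine hs.not_ge ?_
  calc (s.card : ℕ∞) = (s : Set C).encard := (Set.encard_coe_eq_coe_finsetCard s).symm
    _ ≤ (φ '' N).encard + (l.toFinset : Set C).encard :=
      (Set.encard_le_encard hsub).trans (Set.encard_union_le _ _)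
    _ ≤ N.encard + n := by
      rw [Set.encard_coe_eq_coe_finsetCard]
      gcongr
      · exact Set.encard_image_le φ N
      · exact l.toFinset_card_le.trans hl

lemma IsLColoringOn.exists_update [DecidableEq V] (h : IsLColoringOn G L A φ) {n : ℕ}
    (hx : HasSlack G L A x n) {l : List C} (hl : l.length ≤ n) :
    ∃ c ∉ l, IsLColoringOn G L A (update φ x c) := by
  obtain ⟨c, hcL, hne, hcl⟩ := exists_mem_forall_ne_notMem (φ := φ) hx hl
  exact ⟨c, hcl, h.update hcL hne⟩

end Coloring

section Recoloring

variable {V C : Type*} [DecidableEq V] {G : SimpleGraph V} {L : V → Finset C} {A : Set V}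
  {φ ψ χ β : V → C} {σ τ : List (V × C)} {x : V}

/-- `Recoloring G L A φ σ β`: performing the moves `σ`, where `(u, c)` recolors `u` with `c`, leads
from `φ` to `β` through `L`-colorings of `G` induced on `A`. Only the values on `A` matter, so the
end of the sequence is required to agree with `β` on `A` only. -/
inductive Recoloring (G : SimpleGraph V) (L : V → Finset C) (A : Set V) :
    (V → C) → List (V × C) → (V → C) → Prop
  | nil {φ β : V → C} (hφ : IsLColoringOn G L A φ) (heq : Set.EqOn φ β A) : Recoloring G L A φ [] β
  | cons {φ β : V → C} {u : V} {c : C} {σ : List (V × C)} (hφ : IsLColoringOn G L A φ) (hu : u ∈ A)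
      (hne : φ u ≠ c) (hσ : Recoloring G L A (update φ u c) σ β) :
      Recoloring G L A φ ((u, c) :: σ) β

/-- The number of times the moves `σ` recolor `v`. -/
def moveCount (σ : List (V × C)) (v : V) : ℕ := (σ.map Prod.fst).count v

@[simp]
lemma moveCount_nil (v : V) : moveCount ([] : List (V × C)) v = 0 := rfl

lemma moveCount_cons (m : V × C) (σ : List (V × C)) (v : V) :
    moveCount (m :: σ) v = moveCount σ v + if m.1 = v then 1 else 0 := by
  simp [moveCount, List.count_cons]

@[simp]
lemma moveCount_append (σ τ : List (V × C)) (v : V) :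
    moveCount (σ ++ τ) v = moveCount σ v + moveCount τ v := by
  simp [moveCount]

namespace Recoloring

lemma isLColoringOn (h : Recoloring G L A φ σ β) : IsLColoringOn G L A φ := by
  cases h <;> assumption

lemma congr (h : Recoloring G L A φ σ β) (heq : Set.EqOn φ ψ A) : Recoloring G L A ψ σ β := by
  induction h generalizing ψ with
  | nil hφ hβ => exact .nil (hφ.congr heq) (heq.symm.trans hβ)
  | @cons φ β u c σ hφ hu hne _ ih =>
    refine .cons (hφ.congr heq) hu (heq hu ▸ hne) (ih fun v hv => ?_)
    rcases eq_or_ne v u with rfl | hvu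
    · simp
    · simpa [hvu] using heq hv

lemma trans (hφ : Recoloring G L A φ σ ψ) (hψ : Recoloring G L A ψ τ χ) :
    Recoloring G L A φ (σ ++ τ) χ := by
  induction hφ with
  | nil _ heq => exact hψ.congr heq.symm
  | cons hφ hu hne _ ih => exact .cons hφ hu hne (ih hψ)

lemma moveCount_eq_zero_of_notMem (h : Recoloring G L A φ σ β) {v : V} (hv : v ∉ A) :
    moveCount σ v = 0 := by
  induction h with
  | nil => rfl
  | cons _ hu _ _ ih => simp [moveCount_cons, ih, ne_of_mem_of_not_mem hu hv]

lemma eq_of_moveCount_eq_zero (h : Recoloring G L A φ σ β) {v : V} (hv : v ∈ A)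
    (h0 : moveCount σ v = 0) : φ v = β v := by
  induction h with
  | nil _ heq => exact heq hv
  | @cons φ β u c σ _ _ _ _ ih =>
    simp only [moveCount_cons, Nat.add_eq_zero_iff, ite_eq_right_iff, one_ne_zero, imp_false] at h0
    rw [← ih h0.1, update_of_ne (Ne.symm h0.2)]

lemma isLColoringOn_right (h : Recoloring G L A φ σ β) : IsLColoringOn G L A β := by
  induction h with
  | nil hφ heq => exact hφ.congr heq
  | cons _ _ _ _ ih => exact ih

end Recoloring

/-- One can recolor `φ` into `ψ` within the subgraph induced on `A`, moving each vertex `u` at most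
`f u` times. -/
def RecolorableWithin (G : SimpleGraph V) (L : V → Finset C) (A : Set V) (φ ψ : V → C)
    (f : V → ℕ) : Prop :=
  ∃ τ, Recoloring G L A φ τ ψ ∧ ∀ u, moveCount τ u ≤ f u

namespace RecolorableWithin

variable {f g : V → ℕ}

lemma refl (hφ : IsLColoringOn G L A φ) (heq : Set.EqOn φ ψ A) :
    RecolorableWithin G L A φ ψ f :=
  ⟨[], .nil hφ heq, fun _ => Nat.zero_le _⟩

lemma mono (h : RecolorableWithin G L A φ ψ f) (hfg : f ≤ g) : RecolorableWithin G L A φ ψ g :=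
  let ⟨τ, hτ, hf⟩ := h
  ⟨τ, hτ, fun u => (hf u).trans (hfg u)⟩

lemma trans (hφ : RecolorableWithin G L A φ ψ f) (hψ : RecolorableWithin G L A ψ χ g) :
    RecolorableWithin G L A φ χ (f + g) := by
  obtain ⟨σ, hσ, hf⟩ := hφ
  obtain ⟨τ, hτ, hg⟩ := hψ
  refine ⟨σ ++ τ, hσ.trans hτ, fun u => ?_⟩
  rw [moveCount_append]
  exact add_le_add (hf u) (hg u)

lemma isLColoringOn_right (h : RecolorableWithin G L A φ ψ f) : IsLColoringOn G L A ψ :=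
  let ⟨_, hτ, _⟩ := h
  hτ.isLColoringOn_right

lemma eq_of_eq_zero (h : RecolorableWithin G L A φ ψ f) {v : V} (hv : v ∈ A) (h0 : f v = 0) :
    φ v = ψ v :=
  let ⟨_, hτ, hf⟩ := h
  hτ.eq_of_moveCount_eq_zero hv (Nat.le_zero.1 ((hf v).trans_eq h0))

protected lemma update {c : C} (hφ : IsLColoringOn G L A φ) (hx : x ∈ A)
    (hupd : IsLColoringOn G L A (update φ x c)) :
    RecolorableWithin G L A φ (update φ x c) (Pi.single x 1) := by
  by_cases hc : φ x = c
  · exact refl hφ (by simp [← hc, Set.eqOn_refl])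
  · refine ⟨[(x, c)], .cons hφ hx hc (.nil hupd (Set.eqOn_refl _ _)), fun u => ?_⟩
    simp [moveCount_cons, Pi.single_apply, eq_comm]

end RecolorableWithin

lemma IsLColoringOn.exists_recolorableWithin_forall_ne (c : C) {Y : Finset V} (hYA : ↑Y ⊆ A)
    (hY : ∀ y ∈ Y, HasSlack G L A y 1) (hφ : IsLColoringOn G L A φ) :
    ∃ ψ, IsLColoringOn G L A ψ ∧ Set.EqOn ψ φ (↑Y)ᶜ ∧ (∀ y ∈ Y, ψ y ≠ c) ∧
      RecolorableWithin G L A φ ψ (fun u => if u ∈ Y then 1 else 0) := by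
  induction Y using Finset.induction_on with
  | empty =>
    exact ⟨φ, hφ, Set.eqOn_refl _ _, by simp, .refl hφ (Set.eqOn_refl _ _)⟩
  | insert z Y hzY ih =>
    simp only [Finset.coe_insert, Set.insert_subset_iff] at hYA
    simp only [Finset.forall_mem_insert] at hY
    obtain ⟨ψ, hψ, heq, hne, hwithin⟩ := ih hYA.2 hY.2
    obtain ⟨d, hdc, hupd⟩ := hψ.exists_update hY.1 (l := [c]) le_rfl
    refine ⟨update ψ z d, hupd, fun u hu => ?_, fun y hy => ?_,
      (hwithin.trans (.update hψ hYA.1 hupd)).mono fun u => ?_⟩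
    · simp only [Finset.coe_insert, Set.mem_compl_iff, Set.mem_insert_iff, not_or] at hu
      rw [update_of_ne hu.1, heq hu.2]
    · rcases Finset.mem_insert.1 hy with rfl | hy
      · simpa using hdc
      · rw [update_of_ne (ne_of_mem_of_not_mem hy hzY)]
        exact hne y hy
    · by_cases huz : u = z <;> simp [huz, hzY]

-- Before `y` receives its final color, the vertices still to be treated leave that color; so each
-- of them moves once per treated vertex.
lemma IsLColoringOn.recolorableWithin_of_eqOn_compl {Y : Finset V} (hYA : ↑Y ⊆ A)
    (hY : ∀ y ∈ Y, HasSlack G L A y 1) (hφ : IsLColoringOn G L A φ) (hβ : IsLColoringOn G L A β)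
    (heq : Set.EqOn φ β (A \ Y)) :
    RecolorableWithin G L A φ β (fun u => if u ∈ Y then Y.card else 0) := by
  classical
  induction Y using Finset.induction_on generalizing φ with
  | empty => exact .refl hφ (by simpa using heq)
  | insert y Y hyY ih =>
    simp only [Finset.coe_insert, Set.insert_subset_iff] at hYA
    simp only [Finset.forall_mem_insert] at hY
    obtain ⟨ψ, hψ, hψφ, hne, hφψ⟩ := hφ.exists_recolorableWithin_forall_ne (β y) hYA.2 hY.2
    have hψβ : ∀ u ∈ A, u ≠ y → u ∉ Y → ψ u = β u := fun u hu huy huY =>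
      (hψφ huY).trans (heq ⟨hu, by simp [huy, huY]⟩)
    have hupd : IsLColoringOn G L A (update ψ y (β y)) := by
      refine hψ.update (hβ.mem y hYA.1) fun u ⟨hadj, hu⟩ => ?_
      by_cases huY : u ∈ Y
      · exact hne u huY
      · rw [hψβ u hu (SimpleGraph.Adj.ne' hadj) huY]
        exact (hβ.ne y hYA.1 u hu hadj).symm
    have hrest := ih hYA.2 hY.2 hupd fun u hu => by
      rcases eq_or_ne u y with rfl | huy
      · simp
      · rw [update_of_ne huy, hψβ u hu.1 huy hu.2]
    refine ((hφψ.trans (.update hψ hYA.1 hupd)).trans hrest).mono fun u => ?_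
    by_cases huy : u = y
    · simp [huy, hyY]
    · by_cases huY : u ∈ Y <;> simp [huy, huY, Finset.card_insert_of_notMem hyY, add_comm]

/-- The recoloring sequence `σ` from `φ` to `β` on `A \ X` can be extended to `A` by inserting
recolorings of the vertices of `X`, at most `f x` of them for each `x ∈ X`. -/
def Extendable (G : SimpleGraph V) (L : V → Finset C) (A : Set V) (X : Finset V) (φ : V → C)
    (σ : List (V × C)) (β : V → C) (f : V → ℕ) : Prop :=
  ∃ τ, Recoloring G L A φ τ β ∧ (∀ u ∉ X, moveCount τ u = moveCount σ u) ∧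
    ∀ x ∈ X, moveCount τ x ≤ f x

namespace Extendable

variable {X : Finset V} {f g : V → ℕ}

lemma nil (h : RecolorableWithin G L A φ β f) (hf : ∀ u ∉ X, f u = 0) :
    Extendable G L A X φ [] β f := by
  obtain ⟨τ, hτ, hτf⟩ := h
  exact ⟨τ, hτ, fun u hu => Nat.le_zero.1 ((hτf u).trans_eq (hf u hu)), fun x _ => hτf x⟩

lemma mono (h : Extendable G L A X φ σ β f) (hfg : ∀ x ∈ X, f x ≤ g x) :
    Extendable G L A X φ σ β g :=
  let ⟨τ, hτ, hτσ, hτf⟩ := h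
  ⟨τ, hτ, hτσ, fun x hx => (hτf x hx).trans (hfg x hx)⟩

lemma cons {u : V} {c : C} (hφ : IsLColoringOn G L A φ) (huA : u ∈ A) (huX : u ∉ X)
    (hne : φ u ≠ c) (h : Extendable G L A X (update φ u c) σ β f) :
    Extendable G L A X φ ((u, c) :: σ) β f := by
  obtain ⟨τ, hτ, hτσ, hτf⟩ := h
  refine ⟨(u, c) :: τ, .cons hφ huA hne hτ, fun v hv => ?_, fun x hx => ?_⟩
  · rw [moveCount_cons, moveCount_cons, hτσ v hv]
  · simpa [moveCount_cons, (ne_of_mem_of_not_mem hx huX).symm] using hτf x hx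

lemma of_recolorableWithin (h : RecolorableWithin G L A φ ψ f) (hf : ∀ u ∉ X, f u = 0)
    (hψ : Extendable G L A X ψ σ β g) : Extendable G L A X φ σ β (f + g) := by
  obtain ⟨ρ, hρ, hρf⟩ := h
  obtain ⟨τ, hτ, hτσ, hτg⟩ := hψ
  refine ⟨ρ ++ τ, hρ.trans hτ, fun u hu => ?_, fun x hx => ?_⟩
  · rw [moveCount_append, hτσ u hu, Nat.le_zero.1 ((hρf u).trans_eq (hf u hu)), zero_add]
  · rw [moveCount_append]
    exact add_le_add (hρf x) (hτg x hx)

end Extendable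

end Recoloring

section Debt

variable {V C : Type*} {G : SimpleGraph V} [DecidableRel G.Adj] {σ : List (V × C)} {m : V × C}
  {x : V}

/-- The colors that the moves `σ` give to neighbors of `x`, in order. -/
def upcoming (G : SimpleGraph V) [DecidableRel G.Adj] (σ : List (V × C)) (x : V) : List C :=
  (σ.filter fun m => G.Adj x m.1).map Prod.snd

lemma upcoming_cons_of_adj (h : G.Adj x m.1) : upcoming G (m :: σ) x = m.2 :: upcoming G σ x := by
  simp [upcoming, h]

lemma upcoming_cons_of_not_adj (h : ¬G.Adj x m.1) : upcoming G (m :: σ) x = upcoming G σ x := by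
  simp [upcoming, h]

lemma length_upcoming [DecidableEq V] [Fintype (G.neighborSet x)] :
    (upcoming G σ x).length = ∑ u ∈ G.neighborFinset x, moveCount σ u := by
  induction σ with
  | nil => simp [upcoming]
  | cons m σ ih =>
    simp only [moveCount_cons, Finset.sum_add_distrib, ← ih]
    by_cases h : G.Adj x m.1
    · simp [upcoming_cons_of_adj h, h]
    · simp [upcoming_cons_of_not_adj h, h]

lemma length_upcoming_le [DecidableEq V] [Fintype (G.neighborSet x)] {d k : ℕ} {Z : Finset V}
    (hZ : Z ⊆ G.neighborFinset x) (hd : G.degree x ≤ d + Z.card) (hσ : ∀ u, moveCount σ u ≤ k) :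
    (upcoming G σ x).length ≤ d * k + ∑ u ∈ Z, moveCount σ u := by
  have hcard : (G.neighborFinset x \ Z).card ≤ d := by
    rw [Finset.card_sdiff_of_subset hZ, G.card_neighborFinset_eq_degree]
    omega
  rw [length_upcoming, ← Finset.sum_sdiff hZ]
  gcongr
  calc ∑ u ∈ G.neighborFinset x \ Z, moveCount σ u ≤ (G.neighborFinset x \ Z).card • k :=
        Finset.sum_le_card_nsmul _ _ _ fun u _ => hσ u
    _ ≤ d * k := Nat.mul_le_mul_right k hcard

lemma length_upcoming_cons_pos (h : G.Adj x m.1) : 0 < (upcoming G (m :: σ) x).length := by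
  simp [upcoming_cons_of_adj h]

variable [DecidableEq C] {c : C} {ℓ b B M : ℕ}

lemma length_dropWhile_ne_le_of_notMem_take {l : List C} {n : ℕ} (h : c ∉ l.take n) :
    (l.dropWhile (· ≠ c)).length ≤ l.length - n := by
  induction l generalizing n with
  | nil => simp
  | cons d l ih =>
    cases n with
    | zero => exact (List.dropWhile_suffix _).length_le
    | succ n =>
      simp only [List.take_succ_cons, List.mem_cons, not_or] at h
      simpa [List.dropWhile_cons, Ne.symm h.1] using ih h.2

/-- The number of moves of neighbors of `x` in `σ`, counted from the first one that gives a neighbor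
the color `c`: the later ones are those that a future recoloring of `x` has to reckon with if `x`
now has color `c`. -/
def debt (G : SimpleGraph V) [DecidableRel G.Adj] (σ : List (V × C)) (x : V) (c : C) : ℕ :=
  ((upcoming G σ x).dropWhile (· ≠ c)).length

lemma debt_le_length_upcoming : debt G σ x c ≤ (upcoming G σ x).length :=
  (List.dropWhile_suffix _).length_le

lemma debt_le_of_notMem_take {n : ℕ} (h : c ∉ (upcoming G σ x).take n) :
    debt G σ x c ≤ (upcoming G σ x).length - n :=
  length_dropWhile_ne_le_of_notMem_take h

lemma debt_cons_of_not (h : ¬(G.Adj x m.1 ∧ c = m.2)) : debt G (m :: σ) x c = debt G σ x c := by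
  by_cases hadj : G.Adj x m.1
  · have hc : m.2 ≠ c := fun hc => h ⟨hadj, hc.symm⟩
    simp [debt, upcoming_cons_of_adj hadj, hc]
  · simp [debt, upcoming_cons_of_not_adj hadj]

lemma debt_cons_self (h : G.Adj x m.1) :
    debt G (m :: σ) x m.2 = (upcoming G (m :: σ) x).length := by
  simp [debt, upcoming_cons_of_adj h]

/-- With `b` moves left, the vertex `x` of color `c` can follow `σ` if each of its new colors avoids
the next `ℓ` upcoming colors, and `B` times even the next `ℓ + 1`. -/
structure LeafBudget (G : SimpleGraph V) [DecidableRel G.Adj] (ℓ : ℕ) (σ : List (V × C)) (x : V)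
    (c : C) (b B : ℕ) : Prop where
  bonus_le : B ≤ b
  debt_le : debt G σ x c ≤ ℓ * b + B

/-- With `b` moves left, the vertex `x` of color `c` can follow `σ` if its new colors avoid the next
`ℓ` upcoming colors, except for `M` additional moves at arbitrary times, whose new colors avoid only
the next `ℓ - 1`. Such a move may replace a color that was still safe for `ℓ` steps, so it wastes up
to `ℓ` steps and gains `ℓ - 1`: against the `ℓ` steps a move should yield, this is a loss of
`ℓ + 1`. -/
structure CenterBudget (G : SimpleGraph V) [DecidableRel G.Adj] (ℓ : ℕ) (σ : List (V × C)) (x : V)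
    (c : C) (b M : ℕ) : Prop where
  reserve_le : M ≤ b
  debt_le : 0 < debt G σ x c → debt G σ x c + (ℓ + 1) * M ≤ ℓ * b
  length_le : (upcoming G σ x).length + (ℓ + 1) * M ≤ ℓ * b + ℓ

namespace LeafBudget

lemma of_length_le (hB : B ≤ b) (h : (upcoming G σ x).length ≤ ℓ * b + B) :
    LeafBudget G ℓ σ x c b B :=
  ⟨hB, debt_le_length_upcoming.trans h⟩

lemma of_cons (h : LeafBudget G ℓ (m :: σ) x c b B) (hm : ¬(G.Adj x m.1 ∧ c = m.2)) :
    LeafBudget G ℓ σ x c b B :=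
  ⟨h.bonus_le, debt_cons_of_not (σ := σ) hm ▸ h.debt_le⟩

lemma pos (h : LeafBudget G ℓ (m :: σ) x m.2 b B) (hadj : G.Adj x m.1) : 0 < b := by
  have hdebt := h.debt_le
  have hbonus := h.bonus_le
  have hlength := length_upcoming_cons_pos (σ := σ) hadj
  rw [debt_cons_self hadj] at hdebt
  by_contra! hb
  obtain rfl : b = 0 := by omega
  omega

lemma recolor (h : LeafBudget G ℓ (m :: σ) x m.2 b B) (hadj : G.Adj x m.1)
    (hc : c ∉ (upcoming G (m :: σ) x).take (ℓ + min B 1)) :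
    LeafBudget G ℓ (m :: σ) x c (b - 1) (B - 1) := by
  have hdebt := h.debt_le
  have hnew := debt_le_of_notMem_take hc
  rw [debt_cons_self hadj] at hdebt
  refine ⟨Nat.sub_le_sub_right h.bonus_le 1, ?_⟩
  rw [Nat.mul_sub_one]
  omega

end LeafBudget

namespace CenterBudget

lemma of_length_le (h : (upcoming G σ x).length + (ℓ + 1) * M ≤ ℓ * b) :
    CenterBudget G ℓ σ x c b M where
  reserve_le := by nlinarith
  debt_le _ := (Nat.add_le_add_right debt_le_length_upcoming _).trans h
  length_le := by omega

lemma of_cons (h : CenterBudget G ℓ (m :: σ) x c b M) (hm : ¬(G.Adj x m.1 ∧ c = m.2)) :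
    CenterBudget G ℓ σ x c b M where
  reserve_le := h.reserve_le
  debt_le := debt_cons_of_not (σ := σ) hm ▸ h.debt_le
  length_le := by
    refine le_trans ?_ h.length_le
    gcongr
    exact ((List.sublist_cons_self m σ).filter _ |>.map _).length_le

lemma anti {M' : ℕ} (h : CenterBudget G ℓ σ x c b M) (hM : M' ≤ M) :
    CenterBudget G ℓ σ x c b M' where
  reserve_le := hM.trans h.reserve_le
  debt_le hdebt := le_trans (by gcongr) (h.debt_le hdebt)
  length_le := le_trans (by gcongr) h.length_le

lemma reserve_lt (h : CenterBudget G ℓ (m :: σ) x m.2 b M) (hadj : G.Adj x m.1) : M < b := by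
  have hlength := length_upcoming_cons_pos (σ := σ) hadj
  have hdebt := h.debt_le (by rwa [debt_cons_self hadj])
  rw [debt_cons_self hadj] at hdebt
  nlinarith

lemma recolor (h : CenterBudget G ℓ (m :: σ) x m.2 b M) (hadj : G.Adj x m.1)
    (hc : c ∉ (upcoming G (m :: σ) x).take ℓ) : CenterBudget G ℓ (m :: σ) x c (b - 1) M := by
  have hreserve := h.reserve_lt hadj
  have hlength := length_upcoming_cons_pos (σ := σ) hadj
  have hdebt := h.debt_le (by rwa [debt_cons_self hadj])
  have hnew := debt_le_of_notMem_take hc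
  rw [debt_cons_self hadj] at hdebt
  have hb : ℓ ≤ ℓ * b := Nat.le_mul_of_pos_right ℓ (by omega)
  refine ⟨by omega, fun hpos => ?_, ?_⟩ <;> rw [Nat.mul_sub_one] <;> omega

lemma yield {c' : C} (h : CenterBudget G ℓ σ x c b M) (hM : 0 < M)
    (hc' : c' ∉ (upcoming G σ x).take (ℓ - 1)) : CenterBudget G ℓ σ x c' (b - 1) (M - 1) := by
  have hreserve := h.reserve_le
  have hlength := h.length_le
  have hnew := debt_le_of_notMem_take hc'
  have hb : ℓ ≤ ℓ * b := Nat.le_mul_of_pos_right ℓ (hM.trans_le hreserve)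
  have hM' : ℓ + 1 ≤ (ℓ + 1) * M := Nat.le_mul_of_pos_right _ hM
  refine ⟨by omega, fun hpos => ?_, ?_⟩ <;> rw [Nat.mul_sub_one, Nat.mul_sub_one] <;> omega

end CenterBudget

end Debt

section Star

variable {V C : Type*} [DecidableEq V] [DecidableEq C] {G : SimpleGraph V} [DecidableRel G.Adj]
  {L : V → Finset C} {A : Set V} {ℓ : ℕ} {W : Finset V} {z : V} {σ : List (V × C)} {m : V × C}
  {φ β : V → C} {b B : V → ℕ} {x : V} {c : C}

/-- With `b x` moves left for each `x`, the vertices of the star with center `z` and leaves `W` can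
follow `σ` starting from `φ`: each leaf `w` has `B w` moves looking one color further than usual,
and `z` can afford to step aside for each of these. -/
structure Solvent (G : SimpleGraph V) [DecidableRel G.Adj] (ℓ : ℕ) (W : Finset V) (z : V)
    (σ : List (V × C)) (φ : V → C) (b B : V → ℕ) : Prop where
  leaf : ∀ w ∈ W, LeafBudget G ℓ σ w (φ w) (b w) (B w)
  center : CenterBudget G ℓ σ z (φ z) (b z) (∑ w ∈ W, B w)

/-- Some nonempty recoloring of the star with center `z` and leaves `W` leaves its vertices solvent
when it is paid for from their budgets `b`. -/
def HasSolventRecoloring (G : SimpleGraph V) [DecidableRel G.Adj] (L : V → Finset C) (A : Set V)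
    (ℓ : ℕ) (W : Finset V) (z : V) (σ : List (V × C)) (φ : V → C) (b : V → ℕ) : Prop :=
  ∃ φ' f B', RecolorableWithin G L A φ φ' f ∧ f ≤ b ∧ (∀ u ∉ insert z W, f u = 0) ∧
    (∃ x ∈ insert z W, f x ≠ 0) ∧ Solvent G ℓ W z σ φ' (b - f) B'

lemma piSingle_one_le (hB : 0 < B x) : (Pi.single x 1 : V → ℕ) ≤ B := fun u => by
  rcases eq_or_ne u x with rfl | hux
  · simpa using Nat.succ_le_iff.2 hB
  · simp [hux]

lemma sum_sub_piSingle_one (hx : x ∈ W) (hB : 0 < B x) :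
    ∑ w ∈ W, (B - Pi.single x 1 : V → ℕ) w = ∑ w ∈ W, B w - 1 := by
  simp only [Pi.sub_apply, Finset.sum_tsub_distrib W fun w _ => piSingle_one_le hB w,
    Finset.sum_pi_single', hx, if_true]

lemma IsLColoringOn.hasSolventRecoloring_update (hφ : IsLColoringOn G L A φ)
    (hxX : x ∈ insert z W) (hxA : x ∈ A) (hupd : IsLColoringOn G L A (update φ x c)) (hb : 0 < b x)
    (h : Solvent G ℓ W z σ (update φ x c) (b - Pi.single x 1) B) :
    HasSolventRecoloring G L A ℓ W z σ φ b :=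
  ⟨_, _, B, .update hφ hxA hupd, piSingle_one_le hb,
    fun _ hu => Pi.single_eq_of_ne (ne_of_mem_of_not_mem hxX hu).symm 1, ⟨x, hxX, by simp⟩, h⟩

lemma leafBudget_update_of_notMem (hx : x ∉ W) (h : ∀ w ∈ W, LeafBudget G ℓ σ w (φ w) (b w) (B w)) :
    ∀ w ∈ W, LeafBudget G ℓ σ w (update φ x c w) ((b - Pi.single x 1 : V → ℕ) w) (B w) :=
  fun w hw => by simpa [ne_of_mem_of_not_mem hw hx] using h w hw

lemma leafBudget_update_of_mem (hx : LeafBudget G ℓ σ x c (b x - 1) (B x - 1))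
    (h : ∀ w ∈ W, LeafBudget G ℓ σ w (φ w) (b w) (B w)) :
    ∀ w ∈ W, LeafBudget G ℓ σ w (update φ x c w) ((b - Pi.single x 1 : V → ℕ) w)
      ((B - Pi.single x 1 : V → ℕ) w) := fun w hw => by
  rcases eq_or_ne w x with rfl | hwx
  · simpa using hx
  · simpa [hwx] using h w hw

namespace Solvent

lemma update_of_cons {u : V} (h : Solvent G ℓ W z ((u, c) :: σ) φ b B) (hu : u ∉ insert z W)
    (hclash : ∀ x ∈ insert z W, G.Adj x u → φ x ≠ c) : Solvent G ℓ W z σ (update φ u c) b B := by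
  rw [Finset.mem_insert, not_or] at hu
  refine ⟨fun w hw => ?_, ?_⟩
  · rw [update_of_ne (ne_of_mem_of_not_mem hw hu.2)]
    exact (h.leaf w hw).of_cons fun hm => hclash w (Finset.mem_insert_of_mem hw) hm.1 hm.2
  · rw [update_of_ne (Ne.symm hu.1)]
    exact h.center.of_cons fun hm => hclash z (Finset.mem_insert_self z W) hm.1 hm.2

lemma hasSolventRecoloring_of_center (h : Solvent G ℓ W z (m :: σ) φ b B)
    (hφ : IsLColoringOn G L A φ) (hzW : z ∉ W) (hzA : z ∈ A) (hz : HasSlack G L A z ℓ)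
    (hadj : G.Adj z m.1) (hcol : φ z = m.2) : HasSolventRecoloring G L A ℓ W z (m :: σ) φ b := by
  obtain ⟨c, hc, hupd⟩ := hφ.exists_update hz (List.length_take_le ℓ (upcoming G (m :: σ) z))
  have hcenter := hcol ▸ h.center
  refine hφ.hasSolventRecoloring_update (B := B) (Finset.mem_insert_self z W) hzA hupd
    ((Nat.zero_le _).trans_lt (hcenter.reserve_lt hadj))
    ⟨leafBudget_update_of_notMem hzW h.leaf, ?_⟩
  simpa using hcenter.recolor hadj hc

lemma hasSolventRecoloring_of_leaf (h : Solvent G ℓ W z (m :: σ) φ b B)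
    (hφ : IsLColoringOn G L A φ) (hzW : z ∉ W) (hxW : x ∈ W) (hxA : x ∈ A)
    (hadj : G.Adj x m.1) (hcol : φ x = m.2)
    (hc : c ∉ (upcoming G (m :: σ) x).take (ℓ + min (B x) 1))
    (hupd : IsLColoringOn G L A (update φ x c)) :
    HasSolventRecoloring G L A ℓ W z (m :: σ) φ b := by
  have hleaf := hcol ▸ h.leaf x hxW
  have hsum : ∑ w ∈ W, (B - Pi.single x 1 : V → ℕ) w ≤ ∑ w ∈ W, B w :=
    Finset.sum_le_sum fun _ _ => Nat.sub_le _ _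
  refine hφ.hasSolventRecoloring_update (Finset.mem_insert_of_mem hxW) hxA hupd (hleaf.pos hadj)
    ⟨leafBudget_update_of_mem (hleaf.recolor hadj hc) h.leaf, ?_⟩
  simpa [(ne_of_mem_of_not_mem hxW hzW).symm] using h.center.anti hsum

lemma hasSolventRecoloring_of_center_of_leaf {c' : C} (h : Solvent G ℓ W z (m :: σ) φ b B)
    (hφ : IsLColoringOn G L A φ) (hzW : z ∉ W) (hzA : z ∈ A) (hxW : x ∈ W) (hxA : x ∈ A)
    (hadj : G.Adj x m.1) (hcol : φ x = m.2) (hB : 0 < B x)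
    (hc' : c' ∉ (upcoming G (m :: σ) z).take (ℓ - 1))
    (hupd' : IsLColoringOn G L A (update φ z c'))
    (hc : c ∉ (upcoming G (m :: σ) x).take (ℓ + min (B x) 1))
    (hupd : IsLColoringOn G L A (update (update φ z c') x c)) :
    HasSolventRecoloring G L A ℓ W z (m :: σ) φ b := by
  have hxz : x ≠ z := ne_of_mem_of_not_mem hxW hzW
  have hleaf := hcol ▸ h.leaf x hxW
  have hsum : 0 < ∑ w ∈ W, B w := hB.trans_le (Finset.single_le_sum_of_canonicallyOrdered hxW)
  refine ⟨_, Pi.single z 1 + Pi.single x 1, B - Pi.single x 1,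
    .trans (.update hφ hzA hupd') (.update hupd' hxA hupd), fun u => ?_, fun u hu => ?_,
    ⟨z, Finset.mem_insert_self z W, by simp⟩, ?_⟩
  · have hz := piSingle_one_le (hsum.trans_le h.center.reserve_le) u
    have hx := piSingle_one_le (hleaf.pos hadj) u
    rcases eq_or_ne u z with rfl | huz
    · simpa [hxz.symm] using hz
    · simpa [huz] using hx
  · rw [Finset.mem_insert, not_or] at hu
    simp [hu.1, (ne_of_mem_of_not_mem hxW hu.2).symm]
  · rw [← tsub_tsub]
    refine ⟨leafBudget_update_of_mem ?_ (leafBudget_update_of_notMem hzW h.leaf), ?_⟩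
    · simpa [hxz] using hleaf.recolor hadj hc
    · rw [sum_sub_piSingle_one hxW hB]
      simpa [hxz.symm] using h.center.yield hsum hc'

lemma hasSolventRecoloring_of_leaf_bonus (h : Solvent G ℓ W z (m :: σ) φ b B)
    (hℓ : 0 < ℓ) (hφ : IsLColoringOn G L A φ) (hzW : z ∉ W) (hzA : z ∈ A)
    (hz : HasSlack G L A z ℓ) (hxW : x ∈ W) (hxA : x ∈ A) (hx : HasSlack G L A x ℓ)
    (hxz : G.Adj x z) (hadj : G.Adj x m.1) (hcol : φ x = m.2) (hB : 0 < B x) :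
    HasSolventRecoloring G L A ℓ W z (m :: σ) φ b := by
  have hslack : ((G.neighborSet x ∩ A) \ {z}).encard + (ℓ + 1 : ℕ) < (L x).card := by
    have hz : z ∈ G.neighborSet x ∩ A := ⟨hxz, hzA⟩
    rw [Nat.cast_add_one, add_comm (ℓ : ℕ∞), ← add_assoc, Set.encard_sdiff_singleton_add_one hz]
    exact hx
  obtain ⟨c, hcL, hne, hc⟩ := exists_mem_forall_ne_notMem (φ := φ) hslack
    (List.length_take_le (ℓ + 1) (upcoming G (m :: σ) x))
  rw [← Nat.min_eq_right (show 1 ≤ B x from hB)] at hc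
  by_cases hzc : φ z = c
  · obtain ⟨c', hc', hupd'⟩ := hφ.exists_update hz
      (l := c :: (upcoming G (m :: σ) z).take (ℓ - 1))
      (by simp only [List.length_cons, List.length_take]; omega)
    simp only [List.mem_cons, not_or] at hc'
    refine h.hasSolventRecoloring_of_center_of_leaf hφ hzW hzA hxW hxA hadj hcol hB hc'.2 hupd' hc
      (hupd'.update hcL fun u hu => ?_)
    rcases eq_or_ne u z with rfl | huz
    · simpa using hc'.1
    · simpa [huz] using hne u ⟨hu, huz⟩
  · refine h.hasSolventRecoloring_of_leaf hφ hzW hxW hxA hadj hcol hc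
      (hφ.update hcL fun u hu => ?_)
    rcases eq_or_ne u z with rfl | huz
    · exact hzc
    · exact hne u ⟨hu, huz⟩

lemma hasSolventRecoloring (h : Solvent G ℓ W z (m :: σ) φ b B) (hℓ : 0 < ℓ)
    (hφ : IsLColoringOn G L A φ) (hW : ∀ w ∈ W, G.Adj w z) (hXA : ↑(insert z W) ⊆ A)
    (hX : ∀ x ∈ insert z W, HasSlack G L A x ℓ) (hxX : x ∈ insert z W) (hadj : G.Adj x m.1)
    (hcol : φ x = m.2) : HasSolventRecoloring G L A ℓ W z (m :: σ) φ b := by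
  have hzW : z ∉ W := fun hz => (hW z hz).ne rfl
  have hzX := Finset.mem_insert_self z W
  rcases Finset.mem_insert.1 hxX with rfl | hxW
  · exact h.hasSolventRecoloring_of_center hφ hzW (hXA hxX) (hX x hxX) hadj hcol
  · rcases (B x).eq_zero_or_pos with hB | hB
    · obtain ⟨c, hc, hupd⟩ := hφ.exists_update (hX x hxX)
        (List.length_take_le ℓ (upcoming G (m :: σ) x))
      exact h.hasSolventRecoloring_of_leaf hφ hzW hxW (hXA hxX) hadj hcol (by simpa [hB]) hupd
    · exact h.hasSolventRecoloring_of_leaf_bonus hℓ hφ hzW (hXA hzX) (hX z hzX) hxW (hXA hxX)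
        (hX x hxX) (hW x hxW) hadj hcol hB

lemma extendable (h : Solvent G ℓ W z σ φ b B) (hℓ : 0 < ℓ) (hW : ∀ w ∈ W, G.Adj w z)
    (hXA : ↑(insert z W) ⊆ A) (hX : ∀ x ∈ insert z W, HasSlack G L A x ℓ)
    (hφ : IsLColoringOn G L A φ) (hβ : IsLColoringOn G L A β)
    (hσ : Recoloring G L (A \ ↑(insert z W)) φ σ β) :
    Extendable G L A (insert z W) φ σ β fun x => b x + (insert z W).card := by
  set X := insert z W
  induction hn : σ.length + ∑ x ∈ X, b x using Nat.strong_induction_on generalizing σ φ b B with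
  | _ n ih =>
  cases hσ with
  | nil _ heq =>
    have hsync := hφ.recolorableWithin_of_eqOn_compl hXA (fun x hx => (hX x hx).mono hℓ) hβ heq
    exact (Extendable.nil hsync fun u hu => if_neg hu).mono fun x hx => by simp [hx]
  | @cons _ _ u c σ _ hu hne hσ =>
    by_cases hclash : ∃ x ∈ X, G.Adj x u ∧ φ x = c
    · obtain ⟨x, hxX, hadj, hcol⟩ := hclash
      obtain ⟨φ', f, B', hφφ', hfb, hfX, ⟨y, hyX, hfy⟩, h'⟩ :=
        h.hasSolventRecoloring hℓ hφ hW hXA hX hxX hadj hcol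
      have heq : Set.EqOn φ φ' (A \ X) := fun v hv => hφφ'.eq_of_eq_zero hv.1 (hfX v hv.2)
      have hlt : ∑ x ∈ X, (b - f) x < ∑ x ∈ X, b x :=
        Finset.sum_lt_sum (fun x _ => Nat.sub_le _ _)
          ⟨y, hyX, Nat.sub_lt ((Nat.pos_of_ne_zero hfy).trans_le (hfb y)) (Nat.pos_of_ne_zero hfy)⟩
      have hσ' := (Recoloring.cons ‹_› hu hne hσ).congr heq
      have hext := ih _ (by omega) h' hφφ'.isLColoringOn_right hσ' rfl
      exact (Extendable.of_recolorableWithin hφφ' hfX hext).mono fun x _ => by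
        have hfbx : f x ≤ b x := hfb x
        simp only [Pi.add_apply, Pi.sub_apply]
        omega
    · push Not at hclash
      rw [List.length_cons] at hn
      exact .cons hφ hu.1 hu.2 hne (ih _ (by omega) (h.update_of_cons hu.2 hclash)
        (hφ.update_of_sdiff hu hσ.isLColoringOn hclash) hσ rfl)

end Solvent

omit [DecidableEq C] in
lemma Recoloring.extendable (hσ : Recoloring G L (A \ ↑(insert z W)) φ σ β) (hℓ : 0 < ℓ)
    (hW : ∀ w ∈ W, G.Adj w z) (hXA : ↑(insert z W) ⊆ A) (hX : ∀ x ∈ insert z W, HasSlack G L A x ℓ)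
    (hφ : IsLColoringOn G L A φ) (hβ : IsLColoringOn G L A β) (hBb : ∀ w ∈ W, B w ≤ b w)
    (hleaf : ∀ w ∈ W, (upcoming G σ w).length ≤ ℓ * b w + B w)
    (hcenter : (upcoming G σ z).length + (ℓ + 1) * ∑ w ∈ W, B w ≤ ℓ * b z) :
    Extendable G L A (insert z W) φ σ β fun x => b x + (insert z W).card := by
  classical
  have hsolvent : Solvent G ℓ W z σ φ b B :=
    ⟨fun w hw => .of_length_le (hBb w hw) (hleaf w hw), .of_length_le hcenter⟩
  exact hsolvent.extendable hℓ hW hXA hX hφ hβ hσ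

end Star

section Configuration

/-- The reducible configuration: a path `w₁ w₂ w₃` and an edge `v₁ v₂` joined by the edges `v₁ w₁`,
`v₁ w₂`, `v₂ w₂`, `v₂ w₃`, all of whose vertices have small degree in `G`. -/
structure IsReducibleConfig {V : Type*} (G : SimpleGraph V) [G.LocallyFinite]
    (v₁ v₂ w₁ w₂ w₃ : V) : Prop where
  nodup : [v₁, v₂, w₁, w₂, w₃].Nodup
  adj_v₁_v₂ : G.Adj v₁ v₂
  adj_v₁_w₁ : G.Adj v₁ w₁
  adj_v₁_w₂ : G.Adj v₁ w₂
  adj_v₂_w₂ : G.Adj v₂ w₂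
  adj_v₂_w₃ : G.Adj v₂ w₃
  adj_w₁_w₂ : G.Adj w₁ w₂
  adj_w₂_w₃ : G.Adj w₂ w₃
  degree_v₁ : G.degree v₁ ≤ 5
  degree_v₂ : G.degree v₂ ≤ 5
  degree_w₁ : G.degree w₁ ≤ 6
  degree_w₂ : G.degree w₂ ≤ 7
  degree_w₃ : G.degree w₃ ≤ 6

variable {V C : Type*} {G : SimpleGraph V} [G.LocallyFinite] {L : V → Finset C}
  {v₁ v₂ w₁ w₂ w₃ : V} {α β : V → C} {σ : List (V × C)} {k : ℕ}

lemma compl_pair_sdiff_triple [DecidableEq V] :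
    ({v₁, v₂}ᶜ : Set V) \ ↑({w₂, w₁, w₃} : Finset V) = {v₁, v₂, w₁, w₂, w₃}ᶜ := by
  ext u
  simp only [Finset.coe_insert, Finset.coe_singleton, Set.mem_sdiff, Set.mem_compl_iff,
    Set.mem_insert_iff, Set.mem_singleton_iff]
  tauto

namespace IsReducibleConfig

lemma symm (h : IsReducibleConfig G v₁ v₂ w₁ w₂ w₃) : IsReducibleConfig G v₂ v₁ w₃ w₂ w₁ where
  nodup := by
    have hperm : [v₂, v₁, w₃, w₂, w₁].Perm [v₁, v₂, w₁, w₂, w₃] :=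
      (List.Perm.swap _ _ _).trans (((List.reverse_perm [w₁, w₂, w₃]).cons v₂).cons v₁)
    exact hperm.nodup_iff.2 h.nodup
  adj_v₁_v₂ := h.adj_v₁_v₂.symm
  adj_v₁_w₁ := h.adj_v₂_w₃
  adj_v₁_w₂ := h.adj_v₂_w₂
  adj_v₂_w₂ := h.adj_v₁_w₂
  adj_v₂_w₃ := h.adj_v₁_w₁
  adj_w₁_w₂ := h.adj_w₂_w₃.symm
  adj_w₂_w₃ := h.adj_w₁_w₂.symm
  degree_v₁ := h.degree_v₂
  degree_v₂ := h.degree_v₁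
  degree_w₁ := h.degree_w₃
  degree_w₂ := h.degree_w₂
  degree_w₃ := h.degree_w₁

lemma w₁_ne_w₃ (h : IsReducibleConfig G v₁ v₂ w₁ w₂ w₃) : w₁ ≠ w₃ := by
  have hnodup := h.nodup
  simp only [List.nodup_cons, List.mem_cons, List.not_mem_nil, or_false, not_or] at hnodup
  exact hnodup.2.2.1.2

lemma path_subset [DecidableEq V] (h : IsReducibleConfig G v₁ v₂ w₁ w₂ w₃) :
    ↑({w₂, w₁, w₃} : Finset V) ⊆ ({v₁, v₂}ᶜ : Set V) := by
  have hnodup := h.nodup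
  simp only [List.nodup_cons, List.mem_cons, List.not_mem_nil, or_false, not_or] at hnodup
  rw [Finset.coe_insert, Finset.coe_pair, Set.subset_compl_iff_disjoint_right]
  simp only [Set.disjoint_insert_left, Set.disjoint_singleton_left, Set.mem_insert_iff,
    Set.mem_singleton_iff]
  grind

lemma hasSlack_w₁ (h : IsReducibleConfig G v₁ v₂ w₁ w₂ w₃) (hL : 10 ≤ (L w₁).card) :
    HasSlack G L {v₁, v₂}ᶜ w₁ 4 :=
  hasSlack_of_disjoint (d := 5) (Z := {v₁}) (by simp [h.adj_v₁_w₁.symm]) (by simp [h.degree_w₁])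
    (by simp) hL

lemma hasSlack_w₂ (h : IsReducibleConfig G v₁ v₂ w₁ w₂ w₃) (hL : 10 ≤ (L w₂).card) :
    HasSlack G L {v₁, v₂}ᶜ w₂ 4 := by
  classical
  exact hasSlack_of_disjoint (d := 5) (Z := {v₁, v₂})
    (by simp [Finset.insert_subset_iff, h.adj_v₁_w₂.symm, h.adj_v₂_w₂.symm])
    (by simp [Finset.card_pair h.adj_v₁_v₂.ne, h.degree_w₂])
    (by simp [Set.disjoint_compl_right_iff_subset]) hL

lemma hasSlack_v₁ (h : IsReducibleConfig G v₁ v₂ w₁ w₂ w₃) (hL : 10 ≤ (L v₁).card) :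
    HasSlack G L Set.univ v₁ 4 :=
  hasSlack_of_disjoint (d := 5) (Z := ∅) (by simp) (by simp [h.degree_v₁]) (by simp) hL

variable [DecidableEq V]

lemma length_upcoming_w₁_le [DecidableRel G.Adj] (h : IsReducibleConfig G v₁ v₂ w₁ w₂ w₃)
    (hσ : ∀ u, moveCount σ u ≤ k) :
    (upcoming G σ w₁).length ≤ 4 * k + (moveCount σ v₁ + moveCount σ w₂) := by
  have hne : v₁ ≠ w₂ := h.adj_v₁_w₂.ne
  rw [← Finset.sum_pair hne]
  refine length_upcoming_le ?_ ?_ hσ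
  · simp [Finset.insert_subset_iff, h.adj_v₁_w₁.symm, h.adj_w₁_w₂]
  · simp [Finset.card_pair hne, h.degree_w₁]

lemma length_upcoming_w₂_le [DecidableRel G.Adj] (h : IsReducibleConfig G v₁ v₂ w₁ w₂ w₃)
    (hσ : ∀ u, moveCount σ u ≤ k) :
    (upcoming G σ w₂).length ≤
      3 * k + (moveCount σ v₁ + (moveCount σ v₂ + (moveCount σ w₁ + moveCount σ w₃))) := by
  have hnodup := h.nodup
  simp only [List.nodup_cons, List.mem_cons, List.not_mem_nil, or_false, not_or] at hnodup
  obtain ⟨⟨hv₁v₂, hv₁w₁, -, hv₁w₃⟩, ⟨hv₂w₁, -, hv₂w₃⟩, ⟨-, hw₁w₃⟩, -⟩ := hnodup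
  have hbound := length_upcoming_le (Z := {v₁, v₂, w₁, w₃}) (d := 3) (G := G) (x := w₂) ?_ ?_ hσ
  · simpa [hv₁v₂, hv₁w₁, hv₁w₃, hv₂w₁, hv₂w₃, hw₁w₃] using hbound
  · simp [Finset.insert_subset_iff, h.adj_v₁_w₂.symm, h.adj_v₂_w₂.symm, h.adj_w₁_w₂.symm,
      h.adj_w₂_w₃]
  · simp [hv₁v₂, hv₁w₁, hv₁w₃, hv₂w₁, hv₂w₃, hw₁w₃, h.degree_w₂]

lemma length_upcoming_v₁_le [DecidableRel G.Adj] (h : IsReducibleConfig G v₁ v₂ w₁ w₂ w₃)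
    (hσ : ∀ u, moveCount σ u ≤ k) :
    (upcoming G σ v₁).length ≤ 3 * k + (moveCount σ v₂ + moveCount σ w₂) := by
  have hne : v₂ ≠ w₂ := h.adj_v₂_w₂.ne
  rw [← Finset.sum_pair hne]
  refine length_upcoming_le ?_ ?_ hσ
  · simp [Finset.insert_subset_iff, h.adj_v₁_v₂, h.adj_v₁_w₂]
  · simp [Finset.card_pair hne, h.degree_v₁]

-- The twelve bonus moves of `w₁` and `w₃` make up for `4 * (k - 3) = 4 * k - 12`; stepping aside
-- for them costs `w₂` an extra `5 * 24 = 120` in `3 * k + 120 ≤ 4 * ((3 * k + 123) / 4)`.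
lemma exists_recoloring_compl_pair (h : IsReducibleConfig G v₁ v₂ w₁ w₂ w₃) (hk : 164 ≤ k)
    (hL : ∀ u, 10 ≤ (L u).card) (hα : IsLColoringOn G L Set.univ α)
    (hβ : IsLColoringOn G L Set.univ β) (hσ : Recoloring G L {v₁, v₂, w₁, w₂, w₃}ᶜ α σ β)
    (hσk : ∀ u, moveCount σ u ≤ k) :
    ∃ τ, Recoloring G L {v₁, v₂}ᶜ α τ β ∧ (∀ u, moveCount τ u ≤ k) ∧ moveCount τ w₂ + 8 ≤ k := by
  classical
  have hzero : ∀ u ∈ ({v₁, v₂, w₁, w₂, w₃} : Set V), moveCount σ u = 0 := fun u hu =>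
    hσ.moveCount_eq_zero_of_notMem (Set.notMem_compl_iff.2 hu)
  simp only [Set.forall_mem_insert, Set.mem_singleton_iff, forall_eq] at hzero
  obtain ⟨hv₁, hv₂, hw₁, hw₂, hw₃⟩ := hzero
  have hlen₁ := h.length_upcoming_w₁_le hσk
  have hlen₂ := h.length_upcoming_w₂_le hσk
  have hlen₃ := h.symm.length_upcoming_w₁_le hσk
  have hslack₃ : HasSlack G L {v₁, v₂}ᶜ w₃ 4 :=
    Set.pair_comm v₂ v₁ ▸ h.symm.hasSlack_w₁ (hL w₃)
  obtain ⟨b, hb₁, hb₂, hb₃⟩ :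
      ∃ b : V → ℕ, b w₁ = k - 3 ∧ b w₂ = (3 * k + 123) / 4 ∧ b w₃ = k - 3 :=
    ⟨fun u => if u = w₂ then (3 * k + 123) / 4 else k - 3,
      by simp [h.adj_w₁_w₂.ne, h.adj_w₂_w₃.ne']⟩
  rw [← compl_pair_sdiff_triple] at hσ
  obtain ⟨τ, hτ, hτσ, hτk⟩ := hσ.extendable (ℓ := 4) (b := b) (B := fun _ => 12) (by norm_num)
    (by simp [h.adj_w₁_w₂, h.adj_w₂_w₃.symm]) h.path_subset
    (by simp [h.hasSlack_w₁ (hL w₁), h.hasSlack_w₂ (hL w₂), hslack₃])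
    (hα.mono (Set.subset_univ _)) (hβ.mono (Set.subset_univ _))
    (by simp only [Finset.forall_mem_insert, Finset.mem_singleton, forall_eq, hb₁, hb₃]; omega)
    (by simp only [Finset.forall_mem_insert, Finset.mem_singleton, forall_eq, hb₁, hb₃]; omega)
    (by simp only [Finset.sum_const, Finset.card_pair h.w₁_ne_w₃, smul_eq_mul, hb₂]; omega)
  have hcard : Finset.card {w₂, w₁, w₃} ≤ 3 := Finset.card_le_three
  have hbk : ∀ u ∈ ({w₂, w₁, w₃} : Finset V), b u + 3 ≤ k := by
    simp only [Finset.forall_mem_insert, Finset.mem_singleton, forall_eq, hb₁, hb₂, hb₃]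
    omega
  refine ⟨τ, hτ, fun u => ?_, ?_⟩
  · by_cases hu : u ∈ ({w₂, w₁, w₃} : Finset V)
    · exact (hτk u hu).trans ((Nat.add_le_add_left hcard _).trans (hbk u hu))
    · exact hτσ u hu ▸ hσk u
  · have hτw₂ := hτk w₂ (Finset.mem_insert_self _ _)
    simp only [hb₂] at hτw₂
    omega

lemma exists_recoloring_univ (h : IsReducibleConfig G v₁ v₂ w₁ w₂ w₃)
    (hL : ∀ u, 10 ≤ (L u).card) (hα : IsLColoringOn G L Set.univ α)
    (hβ : IsLColoringOn G L Set.univ β) (hσ : Recoloring G L {v₁, v₂}ᶜ α σ β)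
    (hσk : ∀ u, moveCount σ u ≤ k) (hw₂ : moveCount σ w₂ + 8 ≤ k) :
    ∃ τ, Recoloring G L Set.univ α τ β ∧ ∀ u, moveCount τ u ≤ k := by
  classical
  have hv₁ : moveCount σ v₁ = 0 := hσ.moveCount_eq_zero_of_notMem (by simp)
  have hv₂ : moveCount σ v₂ = 0 := hσ.moveCount_eq_zero_of_notMem (by simp)
  have hlen₁ := h.length_upcoming_v₁_le hσk
  have hlen₂ := h.symm.length_upcoming_v₁_le hσk
  have hcompl : Set.univ \ ↑(insert v₁ {v₂} : Finset V) = ({v₁, v₂}ᶜ : Set V) := by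
    simp [Set.compl_eq_univ_sdiff]
  rw [← hcompl] at hσ
  obtain ⟨τ, hτ, hτσ, hτk⟩ := hσ.extendable (ℓ := 4) (b := fun _ => k - 2) (B := 0) (by norm_num)
    (by simp [h.adj_v₁_v₂.symm]) (Set.subset_univ _)
    (by simp [h.hasSlack_v₁ (hL v₁), h.symm.hasSlack_v₁ (hL v₂)]) hα hβ (by simp)
    (by simp only [Finset.mem_singleton, forall_eq, Pi.zero_apply]; omega)
    (by simp only [Finset.sum_singleton, Pi.zero_apply]; omega)
  refine ⟨τ, hτ, fun u => ?_⟩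
  by_cases hu : u ∈ (insert v₁ {v₂} : Finset V)
  · have hcard := Finset.card_le_two (a := v₁) (b := v₂)
    have huk := hτk u hu
    beta_reduce at huk
    omega
  · exact hτσ u hu ▸ hσk u

end IsReducibleConfig

end Configuration

section Conversion

variable {V : Type} {G : SimpleGraph V} {L : V → Finset ℕ} {α β : V → ℕ}

lemma IsLColoringOn.of_induce {A : Set V} {φ : V → ℕ} {ψ : A → ℕ} (hφ : ∀ u : A, ψ u = φ u)
    (hψ : IsLColoring (G.induce A) (fun u => L u) ψ) : IsLColoringOn G L A φ where
  mem v hv := hφ ⟨v, hv⟩ ▸ hψ.1 ⟨v, hv⟩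
  ne u hu w hw hadj := hφ ⟨u, hu⟩ ▸ hφ ⟨w, hw⟩ ▸ hψ.2 (u := ⟨u, hu⟩) (w := ⟨w, hw⟩) hadj

lemma isLColoringOn_univ {φ : V → ℕ} : IsLColoringOn G L Set.univ φ ↔ IsLColoring G L φ :=
  ⟨fun h => ⟨fun v => h.mem v trivial, fun u w => h.ne u trivial w trivial⟩,
    fun h => ⟨fun v _ => h.1 v, fun _ _ _ _ hadj => h.2 hadj⟩⟩

lemma recolorCount_succ {m : ℕ} (φ : Fin (m + 2) → V → ℕ) (v : V) :
    recolorCount φ v = recolorCount (fun i : Fin (m + 1) => φ i.succ) v +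
      if φ 0 v = φ 1 v then 0 else 1 := by
  simp only [recolorCount, Finset.card_filter, Fin.sum_univ_succ, ne_eq, ite_not, add_comm]
  rfl

variable [DecidableEq V]

lemma exists_recoloring_of_isRecolSeq {A : Set V} {m : ℕ} {φ : Fin (m + 1) → A → ℕ}
    (hφ : IsRecolSeq (G.induce A) (fun u => L u) φ (fun u => α u) fun u => β u) :
    ∃ σ, Recoloring G L A α σ β ∧ ∀ u : A, moveCount σ u = recolorCount φ u := by
  obtain ⟨hstart, hend, hcol, hstep⟩ := hφ
  induction m generalizing α with
  | zero =>
    refine ⟨[], .nil (.of_induce (congrFun hstart) (hcol 0)) fun v hv => ?_, fun u => ?_⟩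
    · exact congrFun (hstart.symm.trans hend) ⟨v, hv⟩
    · simp [recolorCount]
  | succ m ih =>
    obtain ⟨v, hv : φ 0 v ≠ φ 1 v, huniq : ∀ u, φ 0 u ≠ φ 1 u → u = v⟩ := hstep 0
    have hstay : ∀ u ≠ v, φ 0 u = φ 1 u := fun u huv => not_imp_comm.1 (huniq u) huv
    have hnext : φ 1 = fun u : A => update α v (φ 1 v) u := by
      ext u
      rcases eq_or_ne u v with rfl | huv
      · simp
      · rw [update_of_ne (Subtype.coe_ne_coe.2 huv), ← hstay u huv, hstart]
    obtain ⟨σ, hσ, hcount⟩ := ih (φ := fun i => φ i.succ) hnext hend (fun i => hcol i.succ)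
      fun i => hstep i.succ
    refine ⟨(↑v, φ 1 v) :: σ, .cons (.of_induce (congrFun hstart) (hcol 0)) v.2
      (congrFun hstart v ▸ hv) hσ, fun u => ?_⟩
    rw [moveCount_cons, hcount, recolorCount_succ]
    rcases eq_or_ne u v with rfl | huv
    · simp [hv]
    · simp [hstay u huv, Subtype.coe_ne_coe.2 huv.symm]

lemma Recoloring.exists_isRecolSeq {σ : List (V × ℕ)} (hσ : Recoloring G L Set.univ α σ β) :
    ∃ (m : ℕ) (ψ : Fin (m + 1) → V → ℕ),
      IsRecolSeq G L ψ α β ∧ ∀ u, recolorCount ψ u = moveCount σ u := by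
  induction hσ with
  | @nil α β hα heq =>
    refine ⟨0, fun _ => α, ⟨rfl, Set.eqOn_univ α β |>.1 heq, fun _ => isLColoringOn_univ.1 hα,
      fun i => i.elim0⟩, fun u => ?_⟩
    simp [recolorCount]
  | @cons α β v c σ hα _ hne _ ih =>
    obtain ⟨m, ψ, ⟨hstart, hend, hcol, hstep⟩, hcount⟩ := ih
    have hmove : ∀ u, α u ≠ ψ 0 u ↔ u = v := fun u => by
      rcases eq_or_ne u v with rfl | huv <;> simp [*]
    refine ⟨m + 1, Fin.cons α ψ, ⟨rfl, ?_, ?_, ?_⟩, fun u => ?_⟩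
    · rw [← Fin.succ_last, Fin.cons_succ, hend]
    · exact Fin.cases (isLColoringOn_univ.1 hα) hcol
    · exact Fin.cases ⟨v, (hmove v).2 rfl, fun u => (hmove u).1⟩ hstep
    · rw [recolorCount_succ, moveCount_cons, ← hcount]
      congr 1
      change (if α u = ψ 0 u then 0 else 1) = if v = u then 1 else 0
      rw [← ite_not]
      exact if_congr ((hmove u).trans eq_comm) rfl rfl

end Conversion

end ListRecoloring

open ListRecoloring in
theorem stmt_13_general {V : Type} (G : SimpleGraph V) [G.LocallyFinite] {k : ℕ} (hk : 164 ≤ k)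
    (L : V → Finset ℕ) (hL : ∀ u, 10 ≤ (L u).card) (α β : V → ℕ) (hα : IsLColoring G L α)
    (hβ : IsLColoring G L β) {v₁ v₂ w₁ w₂ w₃ : V} (h : IsReducibleConfig G v₁ v₂ w₁ w₂ w₃)
    (hrec : ∃ (m : ℕ) (φ : Fin (m + 1) → ↥({v₁, v₂, w₁, w₂, w₃}ᶜ : Set V) → ℕ),
      IsRecolSeq (G.induce {v₁, v₂, w₁, w₂, w₃}ᶜ) (fun u => L u.1) φ (fun u => α u.1)
        (fun u => β u.1) ∧ ∀ u, recolorCount φ u ≤ k) :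
    ∃ (M : ℕ) (ψ : Fin (M + 1) → V → ℕ),
      IsRecolSeq G L ψ α β ∧ ∀ u, recolorCount ψ u ≤ k := by
  classical
  have hα' := isLColoringOn_univ.2 hα
  have hβ' := isLColoringOn_univ.2 hβ
  obtain ⟨m, φ, hφ, hφk⟩ := hrec
  obtain ⟨σ, hσ, hσφ⟩ := exists_recoloring_of_isRecolSeq hφ
  have hσk (u : V) : moveCount σ u ≤ k := by
    by_cases hu : u ∈ ({v₁, v₂, w₁, w₂, w₃}ᶜ : Set V)
    · exact (hσφ ⟨u, hu⟩).trans_le (hφk _)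
    · exact (hσ.moveCount_eq_zero_of_notMem hu).trans_le k.zero_le
  obtain ⟨τ, hτ, hτk, hτw₂⟩ := h.exists_recoloring_compl_pair hk hL hα' hβ' hσ hσk
  obtain ⟨ρ, hρ, hρk⟩ := h.exists_recoloring_univ hL hα' hβ' hτ hτk hτw₂
  obtain ⟨M, ψ, hψ, hψρ⟩ := hρ.exists_isRecolSeq
  exact ⟨M, ψ, hψ, fun u => (hψρ u).trans_le (hρk u)⟩

/-- configuration RC of Fig. more-reduc (c): if `G` contains this configuration and `G − S` has a
`k`-good recoloring sequence between the restrictions of `α` and `β` (`k ≥ 416`),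
then `G` has a `k`-good recoloring sequence from `α` to `β`. -/
theorem stmt_13 {V : Type} [Fintype V] [DecidableEq V]
    (G : SimpleGraph V) [DecidableRel G.Adj]
    (k : ℕ) (hk : 416 ≤ k)
    (L : V → Finset ℕ) (hL : ∀ u, (L u).card = 10)
    (α β : V → ℕ) (hα : IsLColoring G L α) (hβ : IsLColoring G L β)
    (v1 v2 w1 w2 w3 : V) (hnodup : ([v1, v2, w1, w2, w3] : List V).Nodup)
    (he1: G.Adj v1 v2)
    (he2: G.Adj v1 w1)
    (he3: G.Adj v1 w2)
    (he4: G.Adj v2 w2)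
    (he5: G.Adj v2 w3)
    (he6: G.Adj w1 w2)
    (he7: G.Adj w2 w3)
    (hdv1 : G.degree v1 = 5)
    (hdv2 : G.degree v2 = 5)
    (hdw1 : G.degree w1 = 6)
    (hdw2 : G.degree w2 = 7)
    (hdw3 : G.degree w3 = 6)
    (S : Set V) (hS : S = {v1, v2, w1, w2, w3})
    (hrec : ∃ (m : ℕ) (φ : Fin (m + 1) → ↥(Sᶜ) → ℕ),
      IsRecolSeq (G.induce Sᶜ) (fun u => L u.1) φ (fun u => α u.1) (fun u => β u.1) ∧
      ∀ u : ↥(Sᶜ), recolorCount φ u ≤ k) :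
    ∃ (M : ℕ) (ψ : Fin (M + 1) → V → ℕ),
      IsRecolSeq G L ψ α β ∧ ∀ u : V, recolorCount ψ u ≤ k := by
  let : G.LocallyFinite := fun _ => inferInstance
  subst hS
  exact stmt_13_general G ((by norm_num : 164 ≤ 416).trans hk) L (fun u => (hL u).ge) α β hα hβ
    ⟨hnodup, he1, he2, he3, he4, he5, he6, he7, hdv1.le, hdv2.le, hdw1.le, hdw2.le, hdw3.le⟩ hrec
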